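/- For all integers n ≥ 1 and 1 ≤ l ≤ n, the number of permutations σ of {1, …, n} having exactly l cycles is at most 2 · n · n! · 2^{−l}. -/

import Mathlib

theorem pow_cycles_le {n : ℕ} (σ : Equiv.Perm (Fin n)) :
    2 ^ (σ.cycleType.card + (Finset.univ.filter fun x => σ x = x).card) ≤
      Fintype.card {f : Fin n → Bool // f ∘ σ = f} := by
  classical
  let Q : Fin n → {c // c ∈ σ.cycleFactorsFinset} ⊕ {x // σ x = x} := fun x =>
    if h : σ x = x then Sum.inr ⟨x, h⟩ else
      Sum.inl ⟨σ.cycleOf x, by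
        rw [Equiv.Perm.cycleOf_mem_cycleFactorsFinset_iff, Equiv.Perm.mem_support]; exact h⟩
  have hinv : ∀ x, Q (σ x) = Q x := by
    intro x
    by_cases h : σ x = x
    · rw [h]
    · have h' : ¬ σ (σ x) = σ x := fun e => h (σ.injective e)
      simp only [Q, dif_neg h, dif_neg h']
      congr 2
      exact (Equiv.Perm.SameCycle.cycleOf_eq (by simp [Equiv.Perm.SameCycle.refl]))
  have hsurj : Function.Surjective Q := by
    rintro (⟨c, hc⟩ | ⟨x, hx⟩)
    · have hcyc := (Equiv.Perm.mem_cycleFactorsFinset_iff.1 hc).1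
      obtain ⟨x, hx⟩ := hcyc.nonempty_support
      have e := Equiv.Perm.cycle_is_cycleOf hx hc
      have hne : ¬ σ x = x := by
        have := Equiv.Perm.mem_cycleFactorsFinset_support_le hc hx
        simpa using this
      refine ⟨x, ?_⟩
      simp only [Q, dif_neg hne]
      congr 2
      exact e.symm
    · exact ⟨x, by simp only [Q, dif_pos hx]⟩
  have hcard : Fintype.card (({c // c ∈ σ.cycleFactorsFinset} ⊕ {x // σ x = x}) → Bool) =
      2 ^ (σ.cycleType.card + (Finset.univ.filter fun x => σ x = x).card) := by
    rw [Fintype.card_fun, Fintype.card_sum, Fintype.card_bool, Fintype.card_coe,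
      Fintype.card_subtype, Equiv.Perm.cycleType_def]
    simp
  rw [← hcard]
  refine Fintype.card_le_of_injective
    (fun h => ⟨h ∘ Q, by funext x; simp [hinv]⟩) ?_
  intro a b hab
  exact hsurj.injective_comp_right (congrArg Subtype.val hab)

theorem sum_pow_cycles_le (n : ℕ) :
    ∑ σ : Equiv.Perm (Fin n),
      2 ^ (σ.cycleType.card + (Finset.univ.filter fun x => σ x = x).card) ≤
      (n + 1) * n.factorial := by
  classical
  calc _ ≤ ∑ σ : Equiv.Perm (Fin n), Fintype.card {f : Fin n → Bool // f ∘ σ = f} :=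
        Finset.sum_le_sum fun σ _ => pow_cycles_le σ
    _ = ∑ f : Fin n → Bool, Fintype.card {σ : Equiv.Perm (Fin n) // f ∘ σ = f} := by
        simp only [Fintype.card_subtype, Finset.card_filter]
        exact Finset.sum_comm
    _ = ∑ f : Fin n → Bool, (Fintype.card {a // f a = true}).factorial *
          (n - Fintype.card {a // f a = true}).factorial := by
        refine Finset.sum_congr rfl fun f _ => ?_
        rw [DomMulAct.stabilizer_card, Fintype.prod_bool]
        congr 2
        have := Fintype.card_subtype_compl (fun a => f a = true)
        simpa using this
    _ = ∑ s : Finset (Fin n), s.card.factorial * (n - s.card).factorial := by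
        refine Fintype.sum_bijective (fun f => Finset.univ.filter fun a => f a = true) ?_ _ _ ?_
        · constructor
          · intro f g h
            funext a
            have := Finset.ext_iff.1 h a
            simp at this
            exact this
          · intro s
            exact ⟨fun a => decide (a ∈ s), by ext; simp⟩
        · intro f
          rw [Fintype.card_subtype]
    _ = ∑ k ∈ Finset.range (n + 1), n.choose k * (k.factorial * (n - k).factorial) := by
        have := Finset.sum_powerset_apply_card
          (fun k => k.factorial * (n - k).factorial) (x := (Finset.univ : Finset (Fin n)))
        simpa using this
    _ = ∑ k ∈ Finset.range (n + 1), n.factorial := by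
        refine Finset.sum_congr rfl fun k hk => ?_
        rw [← mul_assoc]
        exact Nat.choose_mul_factorial_mul_factorial (by simp at hk; omega)
    _ = _ := by simp
    _ ≤ _ := le_rfl

/-- Lemma 3.4: the number of permutations of `{1, …, n}` with exactly `l` cycles
(fixed points counted as cycles) is at most `2 · n · n! · 2^{-l}`. -/
theorem statement17 (n : ℕ) (hn : 1 ≤ n) (l : ℕ) (hl1 : 1 ≤ l) (hln : l ≤ n) :
    ((Finset.univ.filter fun σ : Equiv.Perm (Fin n) =>
        σ.cycleType.card + (Finset.univ.filter fun x => σ x = x).card = l).card : ℝ) ≤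
      2 * (n : ℝ) * (n.factorial : ℝ) / 2 ^ l := by
  rw [le_div_iff₀ (by positivity)]
  have key : (Finset.univ.filter fun σ : Equiv.Perm (Fin n) =>
        σ.cycleType.card + (Finset.univ.filter fun x => σ x = x).card = l).card * 2 ^ l ≤
      2 * n * n.factorial := by
    calc _ = ∑ σ ∈ Finset.univ.filter (fun σ : Equiv.Perm (Fin n) =>
            σ.cycleType.card + (Finset.univ.filter fun x => σ x = x).card = l),
            2 ^ (σ.cycleType.card + (Finset.univ.filter fun x => σ x = x).card) := by
          rw [← smul_eq_mul, ← Finset.sum_const]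
          refine Finset.sum_congr rfl fun σ hσ => ?_
          rw [(Finset.mem_filter.1 hσ).2]
      _ ≤ ∑ σ : Equiv.Perm (Fin n),
            2 ^ (σ.cycleType.card + (Finset.univ.filter fun x => σ x = x).card) :=
          Finset.sum_le_sum_of_subset (Finset.filter_subset _ _)
      _ ≤ (n + 1) * n.factorial := sum_pow_cycles_le n
      _ ≤ _ := Nat.mul_le_mul_right _ (by omega)
  exact_mod_cast key
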